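/- Let D be a nonempty compact convex subset of ℝ^d (with the L∞ norm), let F₀, F₁ : D → D be continuous, and for t ∈ [0,1] let F_t = (1−t)F₀ + tF₁ be the linear homotopy. Then for every ε > 0 there exist a natural number k and finite sequences t_0, t_1, …, t_k ∈ [0,1] and x_0, x_1, …, x_k ∈ D with t_0 = 0, t_k = 1, such that ‖F_{t_i}(x_i) − x_i‖_∞ ≤ ε for every i, and |t_{i+1} − t_i| ≤ ε and ‖x_{i+1} − x_i‖_∞ ≤ ε for every i < k; that is, an ε-approximate fixpoint of F₀ is connected to an ε-approximate fixpoint of F₁ by a chain of ε-approximate fixpoints of intermediate maps with consecutive members at most ε apart. -/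

import Mathlib

/-!
Brouwer's theorem rests on the volume argument of Milnor and Rogers. If `g` is Lipschitz and
vanishes outside `s`, then `x ↦ x + t • g x` is a bijection of `s` for small `t`, so the integral
over `s` of its Jacobian `det (1 + t • g')` is the volume of `s`. The Jacobian is a polynomial in
`t`, hence the same holds at `t = 1`. A `C¹` retraction `r = id + g` of a ball onto its sphere would
have identically zero Jacobian on the open ball, which is absurd.

For the chains, the points of the closed set of pairs `(t, x)` with `H t x = x` that can be reached
from `t = 0` by steps shorter than `ε` form a clopen subset `U`. Urysohn's lemma gives a map
`φ` into `[0, 1]` equal to `1` on `U` and to `0` on the rest of the set. At a fixed point of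
`(t, x) ↦ (φ (t, x), H t x)` the value of `φ` is `t`; the value `0` would put the point in `U`,
so the point lies in `U` and has `t = 1`.
-/

open Function Metric MeasureTheory Polynomial Set
open scoped NNReal

section Determinant

theorem exists_polynomial_eval_eq_det_one_add_smul {R M : Type*} [CommRing R] [Nontrivial R]
    [AddCommGroup M] [Module R M] [Module.Free R M] [Module.Finite R M] (A : M →ₗ[R] M) :
    ∃ p : R[X], p.natDegree ≤ Module.finrank R M ∧ ∀ t, p.eval t = LinearMap.det (1 + t • A) := by
  let b := Module.Free.chooseBasis R M
  let N := LinearMap.toMatrix b b A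
  refine ⟨((X : R[X]) • N.map C + (1 : Matrix _ _ R).map C).det, ?_, fun t => ?_⟩
  · simpa [Module.finrank_eq_card_chooseBasisIndex] using natDegree_det_X_add_C_le N 1
  · rw [← LinearMap.det_toMatrix b, ← coe_evalRingHom, RingHom.map_det]
    congr 1
    ext i j
    simp only [map_add, map_smul, LinearMap.toMatrix_one, RingHom.mapMatrix_apply,
      Matrix.map_apply, Matrix.add_apply, Matrix.smul_apply, smul_eq_mul, coe_evalRingHom,
      eval_mul, eval_X, eval_C, N]
    exact add_comm _ _

theorem exists_forall_natDegree_le_eval_eq_sum {F : Type*} [Field F] {S : Set F} (hS : S.Infinite)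
    (n : ℕ) (x : F) :
    ∃ (s : Finset F) (w : F → F), ↑s ⊆ S ∧
      ∀ p : F[X], p.natDegree ≤ n → p.eval x = ∑ t ∈ s, w t * p.eval t := by
  classical
  obtain ⟨s, hsS, hs⟩ := hS.exists_subset_card_eq (n + 1)
  refine ⟨s, fun t => (Lagrange.basis s id t).eval x, hsS, fun p hp => ?_⟩
  have hdeg : p.degree < s.card := by
    rw [hs]
    exact degree_le_natDegree.trans_lt (by exact_mod_cast Nat.lt_succ_of_le hp)
  conv_lhs => rw [Lagrange.eq_interpolate (v := id) (injOn_id _) hdeg]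
  simp only [Lagrange.interpolate_apply, eval_finsetSum, eval_mul, eval_C, id_eq, mul_comm]

theorem det_one_add_pos_of_norm_lt_one {E : Type*} [NormedAddCommGroup E] [NormedSpace ℝ E]
    [FiniteDimensional ℝ E] {A : E →L[ℝ] E} (hA : ‖A‖ < 1) : 0 < (1 + A).det := by
  have : CompleteSpace E := FiniteDimensional.complete ℝ E
  have hne : ∀ t ∈ Icc (0 : ℝ) 1, (1 + t • A).det ≠ 0 := by
    intro t ht
    have hu : IsUnit (1 - -(t • A)) := isUnit_one_sub_of_norm_lt_one <| by
      rw [norm_neg, norm_smul, Real.norm_of_nonneg ht.1]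
      exact (mul_le_of_le_one_left (norm_nonneg A) ht.2).trans_lt hA
    rw [sub_neg_eq_add] at hu
    exact ((hu.map ContinuousLinearMap.toLinearMapRingHom).map LinearMap.det).ne_zero
  have hcont : Continuous fun t : ℝ => (1 + t • A).det :=
    ContinuousLinearMap.continuous_det.comp (by fun_prop)
  by_contra! hneg
  obtain ⟨t, ht, ht0⟩ := intermediate_value_Icc' zero_le_one hcont.continuousOn
    (show (0 : ℝ) ∈ Icc _ _ by simpa [ContinuousLinearMap.det] using hneg)
  exact hne t ht ht0

end Determinant

section Volume

theorem bijective_id_add_of_lipschitzWith {E : Type*} [NormedAddCommGroup E] [CompleteSpace E]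
    {g : E → E} {K : ℝ≥0} (hK : K < 1) (hg : LipschitzWith K g) :
    Bijective fun x => x + g x := by
  refine (bijective_iff_existsUnique _).2 fun y => ?_
  have hcontr : ContractingWith K fun x => y - g x :=
    ⟨hK, .of_dist_le_mul fun a b => by
      rw [dist_sub_left]; exact hg.dist_le_mul a b⟩
  have hfix : ∀ x, IsFixedPt (fun x => y - g x) x ↔ x + g x = y := fun x =>
    sub_eq_iff_eq_add.trans eq_comm
  exact ⟨_, (hfix _).1 hcontr.fixedPoint_isFixedPt,
    fun x hx => hcontr.fixedPoint_unique ((hfix x).2 hx)⟩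

theorem bijOn_self_of_eqOn_id_compl {α : Type*} {f : α → α} {s : Set α} (hf : Bijective f)
    (hs : EqOn f id sᶜ) : BijOn f s s := by
  simpa only [compl_compl] using ((bijOn_id sᶜ).congr hs.symm).compl hf

variable {E : Type*} [NormedAddCommGroup E] [NormedSpace ℝ E] [FiniteDimensional ℝ E]
  [MeasurableSpace E] [BorelSpace E] (μ : Measure E) [μ.IsAddHaarMeasure]
  {s : Set E} {g : E → E} {A : E → E →L[ℝ] E} {K : ℝ≥0}

theorem setIntegral_det_one_add_of_lt_one (hs : MeasurableSet s) (hg : LipschitzWith K g)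
    (hK : K < 1) (h0 : ∀ x ∉ s, g x = 0) (hA : ∀ x ∈ s, HasFDerivAt g (A x) x) :
    ∫ x in s, (1 + A x).det ∂μ = μ.real s := by
  have : CompleteSpace E := FiniteDimensional.complete ℝ E
  have hbij : BijOn (fun x => x + g x) s s :=
    bijOn_self_of_eqOn_id_compl (bijective_id_add_of_lipschitzWith hK hg) fun x hx => by
      simp [h0 x hx]
  have hder : ∀ x ∈ s, HasFDerivWithinAt (fun x => x + g x) (1 + A x) s x := fun x hx =>
    ((hasFDerivAt_id x).add (hA x hx)).hasFDerivWithinAt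
  have hpos : ∀ x ∈ s, 0 < (1 + A x).det := fun x hx =>
    det_one_add_pos_of_norm_lt_one (((hA x hx).le_of_lipschitz hg).trans_lt (by exact_mod_cast hK))
  calc ∫ x in s, (1 + A x).det ∂μ = ∫ x in s, |(1 + A x).det| • (1 : ℝ) ∂μ :=
        setIntegral_congr_fun hs fun x hx => by simp [abs_of_pos (hpos x hx)]
    _ = ∫ _ in (fun x => x + g x) '' s, (1 : ℝ) ∂μ :=
        (integral_image_eq_integral_abs_det_fderiv_smul μ hs hder hbij.injOn fun _ => 1).symm
    _ = μ.real s := by simp [hbij.image_eq]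

theorem setIntegral_det_one_add (hs : MeasurableSet s) (hμs : μ s ≠ ⊤) (hg : LipschitzWith K g)
    (h0 : ∀ x ∉ s, g x = 0) (hA : ∀ x ∈ s, HasFDerivAt g (A x) x) :
    ∫ x in s, (1 + A x).det ∂μ = μ.real s := by
  rcases eq_or_ne (μ.real s) 0 with hzero | hne
  · rw [setIntegral_measure_zero _ ((measureReal_eq_zero_iff hμs).1 hzero), hzero]
  obtain ⟨N, w, hN, hw⟩ := exists_forall_natDegree_le_eval_eq_sum
    (Ioo_infinite (show (0 : ℝ) < (K + 1 : ℝ)⁻¹ by positivity)) (Module.finrank ℝ E) 1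
  have hsum : ∑ t ∈ N, w t = 1 := by simpa using (hw 1 (by simp)).symm
  have hdet : ∀ x, (1 + A x).det = ∑ t ∈ N, w t * (1 + t • A x).det := fun x => by
    obtain ⟨p, hp, heval⟩ := exists_polynomial_eval_eq_det_one_add_smul (A x : E →ₗ[ℝ] E)
    have heval' : ∀ t : ℝ, p.eval t = (1 + t • A x).det := heval
    simpa only [heval', one_smul] using hw p hp
  have hsmall : ∀ t ∈ N, ∫ x in s, (1 + t • A x).det ∂μ = μ.real s := by
    intro t ht
    refine setIntegral_det_one_add_of_lt_one μ hs ((lipschitzWith_smul t).comp hg) ?_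
      (fun x hx => by simp [h0 x hx]) fun x hx => (hA x hx).const_smul t
    rw [← NNReal.coe_lt_coe, NNReal.coe_mul, coe_nnnorm, Real.norm_of_nonneg (hN ht).1.le]
    have hKpos : (0 : ℝ) < K + 1 := by positivity
    calc t * K ≤ (K + 1 : ℝ)⁻¹ * K := by gcongr; exact (hN ht).2.le
      _ < 1 := by rw [inv_mul_lt_iff₀ hKpos]; linarith
  have hint : ∀ t ∈ N, IntegrableOn (fun x => (1 + t • A x).det) s μ := fun t ht =>
    .of_integral_ne_zero (by rwa [hsmall t ht])
  calc ∫ x in s, (1 + A x).det ∂μ = ∑ t ∈ N, w t * ∫ x in s, (1 + t • A x).det ∂μ := by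
        simp only [hdet, ← integral_const_mul]
        exact integral_finsetSum _ fun t ht => (hint t ht).const_mul _
    _ = μ.real s := by rw [Finset.sum_congr rfl fun t ht => by rw [hsmall t ht],
        ← Finset.sum_mul, hsum, one_mul]

end Volume

section Brouwer

theorem nonempty_inter_frontier_of_isPreconnected {X : Type*} [TopologicalSpace X] {s t : Set X}
    (ht : IsPreconnected t) (hts : (t ∩ s).Nonempty) (hts' : (t ∩ sᶜ).Nonempty) :
    (t ∩ frontier s).Nonempty := by
  by_contra hempty
  have hcover : t ⊆ interior s ∪ interior sᶜ := by
    rw [← compl_frontier_eq_union_interior]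
    exact fun x hx hxs => hempty ⟨x, hx, hxs⟩
  obtain ⟨x, hxt, hxs⟩ := hts
  obtain ⟨y, hyt, hys⟩ := hts'
  rcases ht.subset_or_subset isOpen_interior isOpen_interior
    (disjoint_compl_right.mono interior_subset interior_subset) hcover with h | h
  · exact hys (interior_subset (h hyt))
  · exact interior_subset (h hxt) hxs

theorem lipschitzWith_indicator_of_eq_zero_on_frontier {E F : Type*} [SeminormedAddCommGroup E]
    [NormedSpace ℝ E] [PseudoMetricSpace F] [Zero F] {s : Set E} (hs : IsClosed s) {g : E → F}
    {K : ℝ≥0} (hg : LipschitzOnWith K g s) (h0 : ∀ x ∈ frontier s, g x = 0) :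
    LipschitzWith K (s.indicator g) := by
  have hmixed : ∀ x ∈ s, ∀ y ∉ s, dist (g x) 0 ≤ K * dist x y := by
    intro x hx y hy
    obtain ⟨z, hzseg, hz⟩ := nonempty_inter_frontier_of_isPreconnected
      (convex_segment (𝕜 := ℝ) x y).isPreconnected
      ⟨x, left_mem_segment ℝ x y, hx⟩ ⟨y, right_mem_segment ℝ x y, hy⟩
    calc dist (g x) 0 = dist (g x) (g z) := by rw [h0 z hz]
      _ ≤ K * dist x z := hg.dist_le_mul x hx z (hs.frontier_subset hz)
      _ ≤ K * dist x y := by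
        gcongr
        rw [← dist_add_dist_of_mem_segment hzseg]
        exact le_add_of_nonneg_right dist_nonneg
  refine .of_dist_le_mul fun x y => ?_
  by_cases hx : x ∈ s <;> by_cases hy : y ∈ s
  · simpa only [indicator_of_mem hx, indicator_of_mem hy] using hg.dist_le_mul x hx y hy
  · simpa only [indicator_of_mem hx, indicator_of_notMem hy] using hmixed x hx y hy
  · simpa only [indicator_of_mem hy, indicator_of_notMem hx, dist_comm] using hmixed y hy x hx
  · simp only [indicator_of_notMem hx, indicator_of_notMem hy, dist_self]
    positivity

section InnerProductSpace

variable {E : Type*} [NormedAddCommGroup E] [InnerProductSpace ℝ E] [FiniteDimensional ℝ E]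

theorem det_eq_zero_of_hasFDerivAt_of_norm_eq {f : E → E} {f' : E →L[ℝ] E} {x : E} {c : ℝ}
    (hc : c ≠ 0) (hf : HasFDerivAt f f' x) (hnorm : ∀ᶠ y in nhds x, ‖f y‖ = c) : f'.det = 0 := by
  have horth : ∀ v, inner ℝ (f x) (f' v) = 0 := by
    have hconst : HasFDerivAt (fun y => ‖f y‖ ^ 2) (0 : E →L[ℝ] ℝ) x :=
      (hasFDerivAt_const (c ^ 2) x).congr_of_eventuallyEq (hnorm.mono fun y hy => by simp [hy])
    intro v
    simpa using congrArg (· v) (hf.norm_sq.unique hconst)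
  by_contra hdet
  obtain ⟨v, hv⟩ := (LinearMap.equivOfDetNeZero _ hdet).surjective (f x)
  have hfx : f x = 0 := by
    rw [← inner_self_eq_zero (𝕜 := ℝ)]
    exact hv ▸ horth v
  exact hc (by rw [← hnorm.self_of_nhds, hfx, norm_zero])

theorem not_mapsTo_sphere_of_contDiffOn_closedBall {r : E → E} {R : ℝ} (hR : 0 < R)
    (hr : ContDiffOn ℝ 1 r (closedBall 0 R)) (hid : EqOn r id (sphere 0 R)) :
    ¬ MapsTo r (closedBall 0 R) (sphere 0 R) := by
  intro hmaps
  borelize E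
  let μ : Measure E := Measure.addHaar
  let g : E → E := (closedBall 0 R).indicator fun x => r x - x
  have hsphere : ∀ x ∈ sphere (0 : E) R, r x - x = 0 := fun x hx => sub_eq_zero.2 (hid hx)
  obtain ⟨K, hK⟩ := (hr.sub contDiffOn_id).exists_lipschitzOnWith one_ne_zero
    (convex_closedBall 0 R) (isCompact_closedBall 0 R)
  have hg : LipschitzWith K g :=
    lipschitzWith_indicator_of_eq_zero_on_frontier isClosed_closedBall hK
      (frontier_closedBall (0 : E) hR.ne' ▸ hsphere)
  have hg0 : ∀ x ∉ ball (0 : E) R, g x = 0 := fun x hx =>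
    indicator_apply_eq_zero.2 fun hx' => hsphere x (le_antisymm hx' (not_lt.1 hx))
  have hrder : ∀ x ∈ ball (0 : E) R, HasFDerivAt r (fderiv ℝ r x) x := fun x hx =>
    ((hr.contDiffAt (closedBall_mem_nhds_of_mem hx)).differentiableAt one_ne_zero).hasFDerivAt
  have hgder : ∀ x ∈ ball (0 : E) R, HasFDerivAt g (fderiv ℝ r x - 1) x := fun x hx =>
    ((hrder x hx).sub (hasFDerivAt_id x)).congr_of_eventuallyEq <|
      (eqOn_indicator (f := fun x => r x - x)).eventuallyEq_of_mem (closedBall_mem_nhds_of_mem hx)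
  have hdet : ∀ x ∈ ball (0 : E) R, (1 + (fderiv ℝ r x - 1)).det = 0 := fun x hx => by
    rw [add_sub_cancel]
    exact det_eq_zero_of_hasFDerivAt_of_norm_eq hR.ne' (hrder x hx) <|
      Filter.eventually_of_mem (closedBall_mem_nhds_of_mem hx) fun y hy => by simpa using hmaps hy
  have hvol := setIntegral_det_one_add μ measurableSet_ball measure_ball_lt_top.ne hg hg0 hgder
  rw [setIntegral_congr_fun measurableSet_ball hdet, integral_zero] at hvol
  exact (ENNReal.toReal_pos (measure_ball_pos μ 0 hR).ne' measure_ball_lt_top.ne).ne hvol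

theorem exists_isFixedPt_of_contDiffOn_of_eq_zero_on_sphere {G : E → E} {R : ℝ} (hR : 0 < R)
    (hG : ContDiffOn ℝ 1 G (closedBall 0 R)) (h0 : ∀ x ∈ sphere (0 : E) R, G x = 0) :
    ∃ x ∈ closedBall (0 : E) R, IsFixedPt G x := by
  by_contra! hfix
  have hne : ∀ x ∈ closedBall (0 : E) R, x - G x ≠ 0 := fun x hx h =>
    hfix x hx (sub_eq_zero.1 h).symm
  have hsub : ContDiffOn ℝ 1 (fun x => x - G x) (closedBall 0 R) := contDiffOn_id.sub hG
  refine not_mapsTo_sphere_of_contDiffOn_closedBall (r := fun x => (R / ‖x - G x‖) • (x - G x)) hR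
    ((contDiffOn_const.div (hsub.norm ℝ hne) fun x hx => norm_ne_zero_iff.2 (hne x hx)).smul hsub)
    (fun x hx => ?_) fun x hx => ?_
  · rw [mem_sphere_zero_iff_norm] at hx
    simp [h0 x (by simpa using hx), hx, hR.ne']
  · simp [norm_smul, abs_of_pos hR, norm_ne_zero_iff.2 (hne x hx)]

theorem exists_isFixedPt_of_contDiff_of_norm_le {G : E → E} {C : ℝ} (hG : ContDiff ℝ 1 G)
    (hC : ∀ x, ‖G x‖ ≤ C) : ∃ x, IsFixedPt G x := by
  have hC0 : 0 ≤ C := (norm_nonneg _).trans (hC 0)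
  let χ : ContDiffBump (0 : E) := ⟨C + 1, C + 2, by positivity, by linarith⟩
  obtain ⟨x, -, hx⟩ := exists_isFixedPt_of_contDiffOn_of_eq_zero_on_sphere
    (G := fun x => χ x • G x) χ.rOut_pos
    (χ.contDiff.smul hG).contDiffOn fun x hx => by
      rw [χ.zero_of_le_dist (mem_sphere.1 hx).ge, zero_smul]
  have hxC : ‖x‖ ≤ C := by
    calc ‖x‖ = χ x * ‖G x‖ := by
          conv_lhs => rw [← hx.eq, norm_smul, Real.norm_of_nonneg χ.nonneg]
      _ ≤ ‖G x‖ := mul_le_of_le_one_left (norm_nonneg _) χ.le_one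
      _ ≤ C := hC x
  have hχ : χ x = 1 := χ.one_of_mem_closedBall
    (mem_closedBall_zero_iff.2 (hxC.trans (le_add_of_nonneg_right zero_le_one)))
  exact ⟨x, by simpa [IsFixedPt, hχ] using hx⟩

end InnerProductSpace

variable {V : Type*} [NormedAddCommGroup V] [NormedSpace ℝ V] [FiniteDimensional ℝ V]

theorem exists_isFixedPt_of_contDiff_of_isBounded_range {G : V → V} (hG : ContDiff ℝ 1 G)
    (hb : Bornology.IsBounded (range G)) : ∃ x, IsFixedPt G x := by
  let e : V ≃L[ℝ] EuclideanSpace ℝ (Fin (Module.finrank ℝ V)) := toEuclidean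
  obtain ⟨C, hC⟩ := (e.lipschitz.isBounded_image hb).exists_norm_le
  obtain ⟨u, hu⟩ := exists_isFixedPt_of_contDiff_of_norm_le
    (e.contDiff.comp (hG.comp e.symm.contDiff)) fun u =>
      hC _ (mem_image_of_mem _ (mem_range_self _))
  exact ⟨e.symm u, e.eq_symm_apply.2 hu⟩

theorem exists_contDiff_mem_convexHull_image {W : Type*} [NormedAddCommGroup W] [NormedSpace ℝ W]
    {D : Set V} (hD : D.Nonempty) (F : V → W) {δ : ℝ} (hδ : 0 < δ) (n : ℕ∞) :
    ∃ G : V → W, ContDiff ℝ n G ∧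
      ∀ x, G x ∈ convexHull ℝ (F '' (D ∩ ball x (infDist x D + δ))) := by
  -- The set of allowed values must not be empty far from `D`, hence the radius `infDist x D + δ`.
  obtain ⟨G, hG⟩ := exists_contMDiffMap_forall_mem_convex_of_local_const
    (modelWithCornersSelf ℝ V) (n := n)
    (t := fun x => convexHull ℝ (F '' (D ∩ ball x (infDist x D + δ))))
    (fun _ => convex_convexHull ℝ _) fun x => by
      obtain ⟨c, hcD, hc⟩ := (infDist_lt_iff hD).1 (lt_add_of_pos_right (infDist x D) hδ)
      have hnear : ∀ᶠ y in nhds x, dist y c < infDist y D + δ :=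
        ContinuousAt.eventually_lt (by fun_prop)
          ((continuous_infDist_pt D).add continuous_const).continuousAt hc
      exact ⟨F c, hnear.mono fun y hy =>
        subset_convexHull ℝ _ (mem_image_of_mem F ⟨hcD, mem_ball'.2 hy⟩)⟩
  exact ⟨G, G.contMDiff.contDiff, hG⟩

theorem exists_dist_lt_of_mapsTo {D : Set V} (hconv : Convex ℝ D) (hcomp : IsCompact D)
    (hne : D.Nonempty) {F : V → V} (hF : ContinuousOn F D) (hm : MapsTo F D D) {ε : ℝ}
    (hε : 0 < ε) : ∃ x ∈ D, dist (F x) x < ε := by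
  obtain ⟨δ, hδ, hFδ⟩ := uniformContinuousOn_iff.1
    (hcomp.uniformContinuousOn_of_continuous hF) ε hε
  obtain ⟨G, hG, hGmem⟩ := exists_contDiff_mem_convexHull_image hne F hδ 1
  have hGD : ∀ x, G x ∈ D := fun x =>
    convexHull_min (hm.mono_left inter_subset_left).image_subset hconv (hGmem x)
  obtain ⟨x, hx⟩ := exists_isFixedPt_of_contDiff_of_isBounded_range hG
    (hcomp.isBounded.subset (range_subset_iff.2 hGD))
  have hxD : x ∈ D := hx ▸ hGD x
  have hball : F '' (D ∩ ball x δ) ⊆ ball (F x) ε := image_subset_iff.2 fun y hy =>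
    hFδ y hy.1 x hxD hy.2
  refine ⟨x, hxD, mem_ball'.1 (convexHull_min hball (convex_ball _ _) ?_)⟩
  simpa [hx.eq, infDist_zero_of_mem hxD] using hGmem x

theorem exists_isFixedPt_of_convex_of_isCompact {D : Set V} (hconv : Convex ℝ D)
    (hcomp : IsCompact D) (hne : D.Nonempty) {F : V → V} (hF : ContinuousOn F D)
    (hm : MapsTo F D D) : ∃ x ∈ D, IsFixedPt F x := by
  obtain ⟨x, hx, hmin⟩ := hcomp.exists_isMinOn hne
    (continuous_dist.comp_continuousOn (hF.prodMk continuousOn_id))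
  refine ⟨x, hx, dist_le_zero.1 (le_of_forall_pos_le_add fun ε hε => ?_)⟩
  obtain ⟨y, hy, hyε⟩ := exists_dist_lt_of_mapsTo hconv hcomp hne hF hm hε
  rw [zero_add]
  exact (hmin hy).trans hyε.le

end Brouwer

section Chains

variable {X : Type*} [PseudoMetricSpace X] {ε : ℝ}

/-- The relation of being less than `ε` apart; its relation series are the `ε`-chains. -/
def distLTRel (X : Type*) [PseudoMetricSpace X] (ε : ℝ) : SetRel X X :=
  {p | dist p.1 p.2 < ε}

theorem isClopen_of_forall_dist_lt {U : Set X} (hε : 0 < ε)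
    (hU : ∀ a ∈ U, ∀ b, dist a b < ε → b ∈ U) : IsClopen U := by
  have hopen : ∀ {s : Set X}, (∀ a ∈ s, ∀ b, dist a b < ε → b ∈ s) → IsOpen s := fun hs =>
    isOpen_iff.2 fun a ha => ⟨ε, hε, fun b hb => hs a ha b (mem_ball'.1 hb)⟩
  exact ⟨⟨hopen fun a ha b hab hb => ha (hU b hb a (dist_comm a b ▸ hab))⟩, hopen hU⟩

theorem isClopen_setOf_exists_relSeries (hε : 0 < ε) (T : Set X) :
    IsClopen {b | ∃ p : RelSeries (distLTRel X ε), p.head ∈ T ∧ p.last = b} := by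
  refine isClopen_of_forall_dist_lt hε ?_
  rintro _ ⟨p, hp, rfl⟩ b hb
  have hrel : (p.last, b) ∈ distLTRel X ε := hb
  exact ⟨p.snoc b hrel, by simpa using hp, by simp⟩

end Chains

section Homotopy

variable {V : Type*}

/-- The pairs `(t, x)` with `t ∈ [0, 1]` and `x ∈ D` such that `x` is fixed by the stage `H t` of
the homotopy `H`. -/
def homotopyFixedPoints (H : ℝ → V → V) (D : Set V) : Set (ℝ × V) :=
  {p | p ∈ Icc (0 : ℝ) 1 ×ˢ D ∧ IsFixedPt (H p.1) p.2}

theorem isClosed_homotopyFixedPoints [TopologicalSpace V] [T2Space V] {H : ℝ → V → V} {D : Set V}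
    (hD : IsClosed D) (hH : ContinuousOn (uncurry H) (Icc 0 1 ×ˢ D)) :
    IsClosed (homotopyFixedPoints H D) :=
  (hH.prodMk continuousOn_snd).preimage_isClosed_of_isClosed (isClosed_Icc.prod hD)
    isClosed_diagonal

theorem continuousOn_linearHomotopy [AddCommGroup V] [Module ℝ V] [TopologicalSpace V]
    [ContinuousAdd V] [ContinuousSMul ℝ V] {D : Set V} {F₀ F₁ : V → V} (h₀ : ContinuousOn F₀ D)
    (h₁ : ContinuousOn F₁ D) (s : Set ℝ) :
    ContinuousOn (uncurry fun (t : ℝ) x => (1 - t) • F₀ x + t • F₁ x) (s ×ˢ D) :=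
  ((continuousOn_const.sub continuousOn_fst).smul (h₀.comp continuousOn_snd mapsTo_snd_prod)).add
    (continuousOn_fst.smul (h₁.comp continuousOn_snd mapsTo_snd_prod))

variable [NormedAddCommGroup V] [NormedSpace ℝ V] [FiniteDimensional ℝ V] {D : Set V}
  {H : ℝ → V → V}

theorem exists_fst_eq_one_of_isClopen_homotopyFixedPoints (hne : D.Nonempty) (hcomp : IsCompact D)
    (hconv : Convex ℝ D) (hH : ContinuousOn (uncurry H) (Icc 0 1 ×ˢ D))
    (hm : ∀ t ∈ Icc (0 : ℝ) 1, MapsTo (H t) D D) {U : Set (homotopyFixedPoints H D)}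
    (hU : IsClopen U) (h0 : ∀ p : homotopyFixedPoints H D, p.1.1 = 0 → p ∈ U) :
    ∃ p ∈ U, p.1.1 = 1 := by
  have hemb := (isClosed_homotopyFixedPoints hcomp.isClosed hH).isClosedEmbedding_subtypeVal
  obtain ⟨φ, hφ0, hφ1, hφ⟩ := exists_continuous_zero_one_of_isClosed
    (hemb.isClosedMap _ hU.compl.isClosed) (hemb.isClosedMap _ hU.isClosed)
    ((disjoint_image_iff Subtype.val_injective).2 disjoint_compl_left)
  obtain ⟨z, hz, hfix⟩ := exists_isFixedPt_of_convex_of_isCompact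
    ((convex_Icc (0 : ℝ) 1).prod hconv) (isCompact_Icc.prod hcomp)
    ((nonempty_Icc.2 zero_le_one).prod hne) (F := fun p => (φ p, H p.1 p.2))
    (φ.continuous.continuousOn.prodMk hH) fun p hp => ⟨hφ p, hm p.1 hp.1 hp.2⟩
  have hzφ : φ z = z.1 := congrArg Prod.fst hfix
  let p : homotopyFixedPoints H D := ⟨z, hz, congrArg Prod.snd hfix⟩
  have hpU : p ∈ U := by
    by_contra hp
    exact hp (h0 p (hzφ.symm.trans (hφ0 ⟨p, hp, rfl⟩)))
  exact ⟨p, hpU, hzφ.symm.trans (hφ1 ⟨p, hpU, rfl⟩)⟩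

theorem chain_of_approx_fixpoints_general (hne : D.Nonempty) (hcomp : IsCompact D)
    (hconv : Convex ℝ D) (hH : ContinuousOn (uncurry H) (Icc 0 1 ×ˢ D))
    (hm : ∀ t ∈ Icc (0 : ℝ) 1, MapsTo (H t) D D) {ε : ℝ} (hε : 0 < ε) :
    ∃ (k : ℕ) (t : Fin (k + 1) → ℝ) (x : Fin (k + 1) → V),
      t 0 = 0 ∧ t (Fin.last k) = 1 ∧
      (∀ i, t i ∈ Icc (0 : ℝ) 1) ∧
      (∀ i, x i ∈ D) ∧
      (∀ i, H (t i) (x i) = x i) ∧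
      (∀ i : Fin k, |t i.succ - t i.castSucc| < ε ∧ dist (x i.succ) (x i.castSucc) < ε) := by
  obtain ⟨_, ⟨p, hp0, rfl⟩, hp1⟩ := exists_fst_eq_one_of_isClopen_homotopyFixedPoints hne hcomp
    hconv hH hm (isClopen_setOf_exists_relSeries hε {a : homotopyFixedPoints H D | a.1.1 = 0})
    fun a ha => ⟨.singleton _ a, ha, rfl⟩
  refine ⟨p.length, fun i => (p i).1.1, fun i => (p i).1.2, hp0, hp1, fun i => (p i).2.1.1,
    fun i => (p i).2.1.2, fun i => (p i).2.2, fun i => ?_⟩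
  have hstep : dist (p i.castSucc).1 (p i.succ).1 < ε := p.step i
  rwa [dist_comm, Prod.dist_eq, max_lt_iff, Real.dist_eq] at hstep

end Homotopy

/-- along the linear homotopy F_t = (1−t)F₀ + tF₁ between two continuous
self-maps of a nonempty compact convex D ⊆ ℝ^d (with the L∞ norm), for every ε > 0 there
is a finite chain of ε-approximate fixpoints of intermediate maps, starting with an
ε-approximate fixpoint of F₀ and ending with one of F₁, in which consecutive parameters
and consecutive points are at most ε apart. -/
theorem chain_of_approx_fixpoints (d : ℕ) (D : Set (Fin d → ℝ))
    (hne : D.Nonempty) (hcomp : IsCompact D) (hconv : Convex ℝ D)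
    (F0 F1 : (Fin d → ℝ) → Fin d → ℝ)
    (hc0 : ContinuousOn F0 D) (hc1 : ContinuousOn F1 D)
    (hm0 : Set.MapsTo F0 D D) (hm1 : Set.MapsTo F1 D D) :
    ∀ ε > (0 : ℝ), ∃ (k : ℕ) (t : Fin (k + 1) → ℝ) (x : Fin (k + 1) → Fin d → ℝ),
      t 0 = 0 ∧ t (Fin.last k) = 1 ∧
      (∀ i, t i ∈ Set.Icc (0 : ℝ) 1) ∧
      (∀ i, x i ∈ D) ∧
      (∀ i, dist ((1 - t i) • F0 (x i) + t i • F1 (x i)) (x i) ≤ ε) ∧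
      (∀ i : Fin k, |t i.succ - t i.castSucc| ≤ ε ∧ dist (x i.succ) (x i.castSucc) ≤ ε) := by
  intro ε hε
  obtain ⟨k, t, x, ht0, ht1, ht, hx, hfix, hstep⟩ := chain_of_approx_fixpoints_general hne hcomp
    hconv (continuousOn_linearHomotopy hc0 hc1 (Icc 0 1)) (fun t ht x hx =>
      hconv (hm0 hx) (hm1 hx) (sub_nonneg.2 ht.2) ht.1 (sub_add_cancel 1 t)) hε
  exact ⟨k, t, x, ht0, ht1, ht, hx, fun i => by rw [hfix i, dist_self]; exact hε.le,
    fun i => ⟨(hstep i).1.le, (hstep i).2.le⟩⟩
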